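/- arXiv:2107.11438 — 8 statements merged into one kernel-verified Lean document; each statement's English description precedes it below -/
import Mathlib

section
/- Let n ≥ 1, k ≥ 3, let v_1, …, v_n be an orthonormal basis of the Euclidean space ℝⁿ, let λ_1, …, λ_n ∈ ℝ and α_1, …, α_n ∈ ℝ, and suppose λ_r·α_r^{k−2} ≤ 0 for every r. Define x : ℝ → ℝⁿ by x(t) = ∑_{r=1}^n α_r·(1 − (k−2)·λ_r·α_r^{k−2}·t)^{−1/(k−2)}·v_r. Then for every t ≥ 0 one has 1 − (k−2)·λ_r·α_r^{k−2}·t > 0 for all r, and ‖x(t)‖ ≤ √n·‖x(0)‖, where ‖·‖ is the Euclidean norm; that is, the equilibrium point at the origin is stable for this initial condition. -/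
/-- Proposition 3, condition (1) (sufficiency): if `λ_r α_r^{k-2} ≤ 0` for all `r`, the
solution is defined for all `t ≥ 0` and `‖x t‖ ≤ √n ‖x 0‖`, i.e. the origin is stable. -/
theorem stmt_4 (n k : ℕ) (hn : 1 ≤ n) (hk : 3 ≤ k)
    (v : OrthonormalBasis (Fin n) ℝ (EuclideanSpace ℝ (Fin n)))
    (lam α : Fin n → ℝ)
    (hneg : ∀ r : Fin n, lam r * α r ^ (k - 2) ≤ 0)
    (x : ℝ → EuclideanSpace ℝ (Fin n))
    (hx : ∀ t : ℝ, x t = ∑ r : Fin n,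
      (α r * (1 - ((k : ℝ) - 2) * lam r * α r ^ (k - 2) * t) ^ (-1 / ((k : ℝ) - 2))) • v r) :
    ∀ t : ℝ, 0 ≤ t →
      (∀ r : Fin n, 0 < 1 - ((k : ℝ) - 2) * lam r * α r ^ (k - 2) * t) ∧
      ‖x t‖ ≤ Real.sqrt n * ‖x 0‖ := by
  have hk' : (0 : ℝ) < (k : ℝ) - 2 := by
    have : (3 : ℝ) ≤ (k : ℝ) := by exact_mod_cast hk
    linarith
  intro t ht
  have hone : ∀ r : Fin n, 1 ≤ 1 - ((k : ℝ) - 2) * lam r * α r ^ (k - 2) * t := by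
    intro r
    have h1 : 0 ≤ (((k : ℝ) - 2) * t) * (-(lam r * α r ^ (k - 2))) :=
      mul_nonneg (mul_nonneg hk'.le ht) (by linarith [hneg r])
    linarith
  refine ⟨fun r => lt_of_lt_of_le one_pos (hone r), ?_⟩
  have key : ∀ c : Fin n → ℝ, ‖∑ r, c r • v r‖ ^ 2 = ∑ r, c r ^ 2 := by
    intro c
    rw [← real_inner_self_eq_norm_sq, v.orthonormal.inner_sum]
    simp [pow_two]
  have hle : ‖x t‖ ≤ ‖x 0‖ := by
    refine (pow_le_pow_iff_left₀ (norm_nonneg _) (norm_nonneg _) two_ne_zero).mp ?_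
    rw [hx t, hx 0, key, key]
    refine Finset.sum_le_sum fun r _ => ?_
    have h0 := Real.rpow_nonneg (zero_le_one.trans (hone r)) (-1 / ((k : ℝ) - 2))
    have h1 : (1 - ((k : ℝ) - 2) * lam r * α r ^ (k - 2) * t) ^ (-1 / ((k : ℝ) - 2)) ≤ 1 :=
      Real.rpow_le_one_of_one_le_of_nonpos (hone r)
        (div_nonpos_of_nonpos_of_nonneg (by norm_num) hk'.le)
    rw [mul_zero, sub_zero, Real.one_rpow, mul_one, mul_pow]
    exact mul_le_of_le_one_right (sq_nonneg _) (pow_le_one₀ h0 h1)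
  have hs : 1 ≤ Real.sqrt n := Real.one_le_sqrt.mpr (by exact_mod_cast hn)
  exact hle.trans (le_mul_of_one_le_left (norm_nonneg _) hs)
end

section
/- Let n ≥ 1, k ≥ 3, let v_1, …, v_n be an orthonormal basis of the Euclidean space ℝⁿ, let λ_1, …, λ_n ∈ ℝ and α_1, …, α_n ∈ ℝ, and suppose λ_r·α_r^{k−2} < 0 for every r. Define x : ℝ → ℝⁿ by x(t) = ∑_{r=1}^n α_r·(1 − (k−2)·λ_r·α_r^{k−2}·t)^{−1/(k−2)}·v_r. Then x(t) → 0 as t → +∞; that is, the equilibrium point at the origin is asymptotically stable for this initial condition. -/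
/-- Proposition 3, condition (2) (sufficiency): if `λ_r α_r^{k-2} < 0` for all `r`, the
solution tends to `0` as `t → +∞`, i.e. the origin is asymptotically stable. -/
theorem stmt_5 (n k : ℕ) (hn : 1 ≤ n) (hk : 3 ≤ k)
    (v : OrthonormalBasis (Fin n) ℝ (EuclideanSpace ℝ (Fin n)))
    (lam α : Fin n → ℝ)
    (hneg : ∀ r : Fin n, lam r * α r ^ (k - 2) < 0)
    (x : ℝ → EuclideanSpace ℝ (Fin n))
    (hx : ∀ t : ℝ, x t = ∑ r : Fin n,
      (α r * (1 - ((k : ℝ) - 2) * lam r * α r ^ (k - 2) * t) ^ (-1 / ((k : ℝ) - 2))) • v r) :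
    Filter.Tendsto x Filter.atTop (nhds 0) := by
  have hk' : (0 : ℝ) < (k : ℝ) - 2 := by
    have : (3 : ℝ) ≤ k := by exact_mod_cast hk
    linarith
  have key : ∀ r : Fin n, Filter.Tendsto (fun t : ℝ =>
      (α r * (1 - ((k : ℝ) - 2) * lam r * α r ^ (k - 2) * t) ^ (-1 / ((k : ℝ) - 2))) • v r)
      Filter.atTop (nhds 0) := by
    intro r
    have hc : 0 < -(((k : ℝ) - 2) * lam r * α r ^ (k - 2)) := by
      have := mul_pos hk' (neg_pos.mpr (hneg r))
      linarith
    have h1 : Filter.Tendsto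
        (fun t : ℝ => 1 - ((k : ℝ) - 2) * lam r * α r ^ (k - 2) * t)
        Filter.atTop Filter.atTop := by
      have := Filter.tendsto_atTop_add_const_left Filter.atTop (1 : ℝ)
        (Filter.tendsto_id.const_mul_atTop hc)
      refine this.congr fun t => ?_
      simp only [id]
      ring
    have h2 := (tendsto_rpow_neg_atTop (one_div_pos.mpr hk')).comp h1
    have h3 := (h2.const_mul (α r)).smul_const (v r)
    simpa [Function.comp_def, neg_div] using h3
  have hs := tendsto_finsetSum Finset.univ (fun r _ => key r)
  rw [Finset.sum_const_zero] at hs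
  exact hs.congr fun t => (hx t).symm
end

section
/- Let n ≥ 1, k ≥ 3, let v_1, …, v_n be an orthonormal basis of the Euclidean space ℝⁿ, and let λ_1, …, λ_n ∈ ℝ and α_1, …, α_n ∈ ℝ. Suppose the set S = {r : λ_r·α_r^{k−2} > 0} is nonempty, and let t* = min_{r ∈ S} 1/((k−2)·λ_r·α_r^{k−2}) > 0. Define x : ℝ → ℝⁿ by x(t) = ∑_{r=1}^n α_r·(1 − (k−2)·λ_r·α_r^{k−2}·t)^{−1/(k−2)}·v_r. Then ‖x(t)‖ → +∞ as t → t* from within the interval [0, t*); that is, the solution blows up in finite time and the origin is unstable for this initial condition. -/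
/-- Proposition 3, condition (3) together with the domain claim of Proposition 1:
if `S = {r : λ_r α_r^{k-2} > 0}` is nonempty and `t* = min_{r ∈ S} 1/((k-2) λ_r α_r^{k-2})`,
then `t* > 0` and `‖x t‖ → +∞` as `t → t*` from within `[0, t*)` (finite-time blow-up). -/
theorem stmt_6 (n k : ℕ) (hn : 1 ≤ n) (hk : 3 ≤ k)
    (v : OrthonormalBasis (Fin n) ℝ (EuclideanSpace ℝ (Fin n)))
    (lam α : Fin n → ℝ)
    (S : Finset (Fin n)) (hS : ∀ r : Fin n, r ∈ S ↔ 0 < lam r * α r ^ (k - 2))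
    (hSne : S.Nonempty)
    (tstar : ℝ)
    (htstar : tstar = S.inf' hSne fun r => 1 / (((k : ℝ) - 2) * lam r * α r ^ (k - 2)))
    (x : ℝ → EuclideanSpace ℝ (Fin n))
    (hx : ∀ t : ℝ, x t = ∑ r : Fin n,
      (α r * (1 - ((k : ℝ) - 2) * lam r * α r ^ (k - 2) * t) ^ (-1 / ((k : ℝ) - 2))) • v r) :
    0 < tstar ∧
    Filter.Tendsto (fun t : ℝ => ‖x t‖)
      (nhdsWithin tstar (Set.Ico 0 tstar)) Filter.atTop := by
  have hk2 : (0 : ℝ) < (k : ℝ) - 2 := by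
    have : (3 : ℝ) ≤ k := by exact_mod_cast hk
    linarith
  obtain ⟨r, hrS, hr⟩ := S.exists_mem_eq_inf' hSne
    (fun r => 1 / (((k : ℝ) - 2) * lam r * α r ^ (k - 2)))
  have hpos := (hS r).1 hrS
  have hα : α r ≠ 0 := by
    intro h
    rw [h, zero_pow (by omega), mul_zero] at hpos
    exact lt_irrefl _ hpos
  have hc : 0 < ((k : ℝ) - 2) * lam r * α r ^ (k - 2) := by
    rw [mul_assoc]; exact mul_pos hk2 hpos
  have ht : tstar = 1 / (((k : ℝ) - 2) * lam r * α r ^ (k - 2)) := htstar.trans hr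
  have hle : ∀ t, |α r| * |(1 - ((k : ℝ) - 2) * lam r * α r ^ (k - 2) * t) ^ (-1 / ((k : ℝ) - 2))|
      ≤ ‖x t‖ := by
    intro t
    have h1 : inner ℝ (v r) (x t) =
        α r * (1 - ((k : ℝ) - 2) * lam r * α r ^ (k - 2) * t) ^ (-1 / ((k : ℝ) - 2)) := by
      rw [hx t, v.orthonormal.inner_right_fintype]
    have h2 := abs_real_inner_le_norm (v r) (x t)
    rw [h1, v.orthonormal.1 r, one_mul, abs_mul] at h2
    exact h2
  generalize ((k : ℝ) - 2) * lam r * α r ^ (k - 2) = c at hc ht hle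
  refine ⟨by rw [ht]; positivity, ?_⟩
  refine Filter.tendsto_atTop_mono hle ?_
  refine Filter.Tendsto.const_mul_atTop (abs_pos.2 hα) ?_
  refine Filter.tendsto_abs_atTop_atTop.comp ?_
  have hb : Filter.Tendsto (fun t : ℝ => 1 - c * t) (nhdsWithin tstar (Set.Ico 0 tstar))
      (nhdsWithin 0 (Set.Ioi 0)) := by
    refine tendsto_nhdsWithin_iff.2 ⟨?_, ?_⟩
    · have h : Filter.Tendsto (fun t : ℝ => 1 - c * t) (nhds tstar) (nhds (1 - c * tstar)) :=
        Continuous.tendsto (by fun_prop) _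
      have h0 : 1 - c * tstar = 0 := by rw [ht]; field_simp; simp
      rw [h0] at h
      exact h.mono_left nhdsWithin_le_nhds
    · filter_upwards [self_mem_nhdsWithin] with t htt
      have h1 : c * t < c * tstar := mul_lt_mul_of_pos_left htt.2 hc
      have h0 : c * tstar = 1 := by rw [ht]; field_simp
      simp only [Set.mem_Ioi]
      linarith
  have hneg : -1 / ((k : ℝ) - 2) < 0 := div_neg_of_neg_of_pos (by norm_num) hk2
  exact (tendsto_rpow_neg_nhdsGT_zero hneg).comp hb
end

section
/- Let n ≥ 1 and let k ≥ 4 be an even natural number. Let v_1, …, v_n be an orthonormal basis of the Euclidean space ℝⁿ and let λ_1, …, λ_n ∈ ℝ with λ_r < 0 for all r. Then for every choice of coefficients α_1, …, α_n ∈ ℝ, the solution x(t) = ∑_{r=1}^n α_r·(1 − (k−2)·λ_r·α_r^{k−2}·t)^{−1/(k−2)}·v_r is defined for all t ≥ 0 (i.e., 1 − (k−2)·λ_r·α_r^{k−2}·t > 0 for all r and all t ≥ 0) and x(t) → 0 as t → +∞; that is, the odeco HPDS of odd degree k−1 is globally asymptotically stable at the origin. -/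
/-- Corollary 1 (asymptotic stability part): for even `k ≥ 4`, if all `λ_r < 0` then for every
initial condition the solution is defined on `[0, ∞)` and tends to `0`, i.e. the odeco HPDS of
odd degree `k-1` is globally asymptotically stable at the origin. -/
theorem stmt_7 (n k : ℕ) (hn : 1 ≤ n) (hk : 4 ≤ k) (hke : Even k)
    (v : OrthonormalBasis (Fin n) ℝ (EuclideanSpace ℝ (Fin n)))
    (lam : Fin n → ℝ) (hlam : ∀ r : Fin n, lam r < 0) :
    ∀ α : Fin n → ℝ,
      (∀ t : ℝ, 0 ≤ t → ∀ r : Fin n,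
        0 < 1 - ((k : ℝ) - 2) * lam r * α r ^ (k - 2) * t) ∧
      Filter.Tendsto
        (fun t : ℝ => ∑ r : Fin n,
          (α r * (1 - ((k : ℝ) - 2) * lam r * α r ^ (k - 2) * t) ^ (-1 / ((k : ℝ) - 2))) • v r)
        Filter.atTop (nhds (0 : EuclideanSpace ℝ (Fin n))) := by
  intro α
  have hk2 : (0 : ℝ) < (k : ℝ) - 2 := by
    have : (4 : ℝ) ≤ k := by exact_mod_cast hk
    linarith
  have hev : Even (k - 2) := by
    obtain ⟨m, rfl⟩ := hke
    exact ⟨m - 1, by omega⟩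
  refine ⟨?_, ?_⟩
  · intro t ht r
    have h1 : 0 ≤ α r ^ (k - 2) := hev.pow_nonneg _
    have h2 : 0 ≤ ((k : ℝ) - 2) * (-lam r) * α r ^ (k - 2) * t := by
      have := hlam r
      have h3 : 0 ≤ -lam r := by linarith
      positivity
    nlinarith
  · rw [show (0 : EuclideanSpace ℝ (Fin n)) = ∑ r : Fin n, (0 : ℝ) • v r by simp]
    refine tendsto_finsetSum _ fun r _ => Filter.Tendsto.smul_const ?_ _
    by_cases ha : α r = 0
    · simp [ha]
    · have h1 : 0 < α r ^ (k - 2) := hev.pow_pos ha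
      have h3 : 0 < -lam r := by linarith [hlam r]
      have hc : 0 < ((k : ℝ) - 2) * (-lam r) * α r ^ (k - 2) := by positivity
      have hT : Filter.Tendsto
          (fun t : ℝ => 1 - ((k : ℝ) - 2) * lam r * α r ^ (k - 2) * t)
          Filter.atTop Filter.atTop := by
        have := Filter.tendsto_atTop_add_const_left Filter.atTop (1 : ℝ)
          (Filter.tendsto_id.const_mul_atTop hc)
        refine this.congr fun t => ?_
        simp only [id]
        ring
      have := ((tendsto_rpow_neg_atTop (y := 1 / ((k : ℝ) - 2)) (by positivity)).comp hT).const_mul (α r)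
      simpa [Function.comp_def, neg_div] using this
end

section
/- Let n ≥ 1 and let k ≥ 4 be an even natural number. Let v_1, …, v_n be an orthonormal basis of the Euclidean space ℝⁿ and let λ_1, …, λ_n ∈ ℝ with λ_s > 0 for some index s. Then there exist coefficients α_1, …, α_n ∈ ℝ and a finite time t* > 0 such that the solution x(t) = ∑_{r=1}^n α_r·(1 − (k−2)·λ_r·α_r^{k−2}·t)^{−1/(k−2)}·v_r satisfies ‖x(t)‖ → +∞ as t → t* from within [0, t*); that is, the origin is unstable. -/
/-- Corollary 1 (instability part): for even `k ≥ 4`, if some `λ_s > 0`, then there exist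
coefficients `α` and a finite time `t* > 0` such that the corresponding solution blows up
as `t → t*` from within `[0, t*)`, i.e. the origin is unstable. -/
theorem stmt_8 (n k : ℕ) (hn : 1 ≤ n) (hk : 4 ≤ k) (hke : Even k)
    (v : OrthonormalBasis (Fin n) ℝ (EuclideanSpace ℝ (Fin n)))
    (lam : Fin n → ℝ) (hlam : ∃ s : Fin n, 0 < lam s) :
    ∃ (α : Fin n → ℝ) (tstar : ℝ), 0 < tstar ∧
      Filter.Tendsto
        (fun t : ℝ => ‖(∑ r : Fin n,
          (α r * (1 - ((k : ℝ) - 2) * lam r * α r ^ (k - 2) * t) ^ (-1 / ((k : ℝ) - 2))) • v r :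
            EuclideanSpace ℝ (Fin n))‖)
        (nhdsWithin tstar (Set.Ico 0 tstar)) Filter.atTop := by
  obtain ⟨s, hs⟩ := hlam
  have hk' : (0 : ℝ) < (k : ℝ) - 2 := by
    have : (4 : ℝ) ≤ k := by exact_mod_cast hk
    linarith
  have hc : 0 < ((k : ℝ) - 2) * lam s := mul_pos hk' hs
  refine ⟨Pi.single s 1, 1 / (((k : ℝ) - 2) * lam s), by positivity, ?_⟩
  set c := ((k : ℝ) - 2) * lam s with hcdef
  have hlim : Filter.Tendsto (fun t : ℝ => 1 - c * t)
      (nhdsWithin (1 / c) (Set.Ico 0 (1 / c))) (nhdsWithin 0 (Set.Ioi 0)) := by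
    apply tendsto_nhdsWithin_of_tendsto_nhds_of_eventually_within
    · have h : Filter.Tendsto (fun t : ℝ => 1 - c * t) (nhds (1 / c)) (nhds (1 - c * (1 / c))) :=
        Continuous.tendsto (by fun_prop) _
      rw [mul_one_div_cancel hc.ne', sub_self] at h
      exact h.mono_left nhdsWithin_le_nhds
    · filter_upwards [self_mem_nhdsWithin] with t ht
      have := (lt_div_iff₀ hc).1 ht.2
      simp only [Set.mem_Ioi]
      linarith
  have hneg : -1 / ((k : ℝ) - 2) < 0 := div_neg_of_neg_of_pos (by norm_num) hk'
  have h2 := (tendsto_rpow_neg_nhdsGT_zero hneg).comp hlim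
  refine (Filter.tendsto_abs_atTop_atTop.comp h2).congr ?_
  intro t
  rw [Finset.sum_eq_single s]
  · simp [norm_smul, hcdef]
  · intro b _ hb
    simp [Pi.single_eq_of_ne hb]
  · simp
end

section
/- Let n ≥ 1 and m ≥ 1, and let T : (Fin (2m) → Fin n) → ℝ be a supersymmetric tensor of even order k = 2m, i.e., T(i ∘ σ) = T(i) for every permutation σ of Fin (2m). Let A be the real matrix indexed by pairs of tuples J, I : Fin m → Fin n with entries A_{J,I} = T(J_1, …, J_m, I_1, …, I_m) (the unfolding ψ(T)); A is symmetric. Suppose λ ∈ ℝ and v ∈ ℝⁿ with ‖v‖ = 1 satisfy the Z-eigenvalue equation: for every j, ∑_{i : Fin (2m−1) → Fin n} T(j, i_1, …, i_{2m−1})·∏_{p=1}^{2m−1} v_{i_p} = λ·v_j. Then λ ≤ μ_max, where μ_max is the largest eigenvalue of the symmetric matrix A. -/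
theorem rayleigh_aux {ι : Type*} [Fintype ι] [DecidableEq ι] (A : Matrix ι ι ℝ)
    (hA : A.IsHermitian) (w : ι → ℝ) (hw : ∑ i, w i * w i = 1) :
    ∑ J, ∑ I, w J * A J I * w I ≤ ⨆ i, hA.eigenvalues i := by
  have hsym : ∀ I J, A I J = A J I := fun I J => by
    have := hA.apply I J
    simpa using this.symm
  set b := hA.eigenvectorBasis with hb
  set x : EuclideanSpace ℝ ι := WithLp.toLp 2 w with hx
  set y : EuclideanSpace ℝ ι := WithLp.toLp 2 (A.mulVec w) with hy
  have h1 : ∑ J, ∑ I, w J * A J I * w I = inner ℝ x y := by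
    simp only [hx, hy, PiLp.inner_apply, RCLike.inner_apply, conj_trivial, Matrix.mulVec,
      dotProduct, Finset.sum_mul]
    refine Finset.sum_congr rfl fun J _ => Finset.sum_congr rfl fun I _ => by ring
  have h2 : ∀ i, inner ℝ (b i) y = hA.eigenvalues i * inner ℝ (b i) x := by
    intro i
    have he := hA.mulVec_eigenvectorBasis i
    have he' : ∀ I, ∑ J, A I J * b i J = hA.eigenvalues i * b i I := fun I => by
      have := congrFun he I
      simpa [Matrix.mulVec, dotProduct] using this
    simp only [hx, hy, PiLp.inner_apply, RCLike.inner_apply, conj_trivial, Matrix.mulVec,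
      dotProduct, Finset.sum_mul, Finset.mul_sum]
    rw [Finset.sum_comm]
    refine Finset.sum_congr rfl fun I _ => ?_
    have : hA.eigenvalues i * (w I * b i I) = w I * ∑ J, A I J * b i J := by
      rw [he' I]; ring
    rw [this, Finset.mul_sum]
    refine Finset.sum_congr rfl fun J _ => ?_
    rw [hsym I J]; ring
  have hxx : inner ℝ x x = (1 : ℝ) := by
    simpa only [hx, PiLp.inner_apply, RCLike.inner_apply, conj_trivial] using hw
  rw [h1, ← b.sum_inner_mul_inner x y]
  have h3 : ∑ i, inner ℝ x (b i) * inner ℝ (b i) x = (1 : ℝ) := by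
    rw [b.sum_inner_mul_inner x x, hxx]
  calc ∑ i, inner ℝ x (b i) * inner ℝ (b i) y
      ≤ ∑ i, (⨆ i, hA.eigenvalues i) * (inner ℝ x (b i) * inner ℝ (b i) x) := by
        refine Finset.sum_le_sum fun i _ => ?_
        rw [h2 i, real_inner_comm (b i) x]
        have hle : hA.eigenvalues i ≤ ⨆ i, hA.eigenvalues i :=
          le_ciSup (Set.finite_range _).bddAbove i
        nlinarith [mul_le_mul_of_nonneg_right hle (mul_self_nonneg (inner ℝ (b i) x : ℝ))]
    _ = _ := by rw [← Finset.mul_sum, h3, mul_one]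

theorem sum_append_aux (n m k : ℕ) (h : k = m + m) (T : (Fin k → Fin n) → ℝ) (v : Fin n → ℝ) :
    ∑ J : Fin m → Fin n, ∑ I : Fin m → Fin n,
      (∏ p, v (J p)) * T (Fin.append J I ∘ Fin.cast h) * ∏ p, v (I p)
    = ∑ x : Fin k → Fin n, T x * ∏ p, v (x p) := by
  subst h
  rw [← Fintype.sum_prod_type', ← (Fin.appendEquiv m m).sum_comp]
  refine Finset.sum_congr rfl fun x _ => ?_
  simp only [Fin.appendEquiv, Equiv.coe_fn_mk, Fin.prod_univ_add, Fin.append_left,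
    Fin.append_right, Fin.cast_refl, Function.comp_id]
  ring

theorem sum_cons_aux (n l k : ℕ) (h : k = l + 1) (T : (Fin k → Fin n) → ℝ) (v : Fin n → ℝ) :
    ∑ j : Fin n, v j * ∑ i : Fin l → Fin n,
      T ((Fin.cons j i : Fin (l + 1) → Fin n) ∘ Fin.cast h) * ∏ p, v (i p)
    = ∑ x : Fin k → Fin n, T x * ∏ p, v (x p) := by
  subst h
  rw [← (Fin.consEquiv fun _ => Fin n).sum_comp, Fintype.sum_prod_type]
  refine Finset.sum_congr rfl fun j _ => ?_
  rw [Finset.mul_sum]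
  refine Finset.sum_congr rfl fun x _ => ?_
  simp only [Fin.consEquiv, Equiv.coe_fn_mk, Fin.prod_univ_succ, Fin.cons_zero,
    Fin.cons_succ, Fin.cast_refl, Function.comp_id]
  ring


/-- Lemma 1: for a supersymmetric tensor `T` of even order `2m`, every Z-eigenvalue `λ` of `T`
is bounded above by the largest eigenvalue `μ_max` of the symmetric unfolding matrix
`A = ψ(T)`, `A J I = T(J ⧺ I)`. -/
theorem stmt_10 (n m : ℕ) (hn : 1 ≤ n) (hm : 1 ≤ m)
    (T : (Fin (2 * m) → Fin n) → ℝ)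
    (hsymm : ∀ (σ : Equiv.Perm (Fin (2 * m))) (i : Fin (2 * m) → Fin n), T (i ∘ σ) = T i)
    (A : Matrix (Fin m → Fin n) (Fin m → Fin n) ℝ)
    (hA : ∀ J I : Fin m → Fin n,
      A J I = T (Fin.append J I ∘ Fin.cast (by omega : 2 * m = m + m)))
    (lam : ℝ) (v : EuclideanSpace ℝ (Fin n)) (hv : ‖v‖ = 1)
    (heig : ∀ j : Fin n,
      ∑ i : Fin (2 * m - 1) → Fin n,
        T (Fin.cons j i ∘ Fin.cast (by omega : 2 * m = 2 * m - 1 + 1)) *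
          ∏ p : Fin (2 * m - 1), v (i p)
      = lam * v j) :
    ∃ hAh : A.IsHermitian, lam ≤ ⨆ i : Fin m → Fin n, hAh.eigenvalues i := by
  have hvv : ∑ j, v j * v j = 1 := by
    have := EuclideanSpace.real_norm_sq_eq v
    rw [hv] at this
    simp only [pow_two] at this
    linarith
  have hAh : A.IsHermitian := by
    ext J I
    simp only [Matrix.conjTranspose_apply, star_trivial]
    rw [hA, hA]
    have h2 : 2 * m = m + m := by omega
    rw [← hsymm (((finCongr h2).trans finAddFlip).trans (finCongr h2).symm)
      (Fin.append J I ∘ Fin.cast (by omega : 2 * m = m + m))]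
    congr 1
    funext p
    obtain ⟨q, rfl⟩ := (finCongr h2).symm.surjective p
    induction q using Fin.addCases <;> simp [-Fin.natAdd_eq_addNat]
  refine ⟨hAh, ?_⟩
  have hw : ∑ J : Fin m → Fin n, (∏ p, v (J p)) * (∏ p, v (J p)) = 1 := by
    simp only [← Finset.prod_mul_distrib]
    rw [← Fintype.prod_sum (fun (_ : Fin m) j => v j * v j)]
    simp [hvv]
  have key := rayleigh_aux A hAh (fun J => ∏ p, v (J p)) hw
  simp only [hA] at key
  rw [sum_append_aux n m (2 * m) _ T v,
    ← sum_cons_aux n (2 * m - 1) (2 * m) (by omega) T v] at key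
  have h4 : ∑ j, v j * (lam * v j) = lam := by
    calc _ = lam * ∑ j, v j * v j := by
          rw [Finset.mul_sum]; exact Finset.sum_congr rfl fun j _ => by ring
      _ = lam := by rw [hvv, mul_one]
  rw [← h4]
  refine le_trans (le_of_eq ?_) key
  exact Finset.sum_congr rfl fun j _ => by rw [← heig j]
end

section
/- Let k ≥ 3 be a natural number, a = (k−2)/(k−1), λ ∈ ℝ with λ ≠ 0, and b ∈ ℝ. Define g(a, z) = a·∑_{m=0}^∞ z^m/(a+m) for |z| < 1, and define H(c) = −g(a, −b/(λ·c^{k−1})) / ((k−2)·λ·c^{k−2}). Then for every c ∈ ℝ with c ≠ 0 and |b| < |λ|·|c|^{k−1}, the function H is differentiable at c with derivative H′(c) = 1/(λ·c^{k−1} + b). -/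
theorem aux_series (a z : ℝ) (ha : 0 < a) (hz : |z| < 1) :
    ∃ D : ℝ, HasDerivAt (fun z : ℝ => ∑' m : ℕ, z ^ m / (a + m)) D z ∧
      a * (∑' m : ℕ, z ^ m / (a + m)) + z * D = (1 - z)⁻¹ := by
  obtain ⟨r, hzr, hr1⟩ := exists_between hz
  have hr0 : 0 ≤ r := (abs_nonneg z).trans hzr.le
  have hpos : ∀ m : ℕ, 0 < a + m := fun m => by positivity
  have hu : Summable (fun m : ℕ => r ^ (m - 1)) := by
    rw [← summable_nat_add_iff 1]
    simpa using summable_geometric_of_lt_one hr0 hr1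
  have hb : ∀ (m : ℕ) (y : ℝ), y ∈ Metric.ball (0 : ℝ) r →
      ‖(m * y ^ (m - 1)) / (a + m)‖ ≤ r ^ (m - 1) := by
    intro m y hy
    have hy' : |y| ≤ r := by
      have := Metric.mem_ball.1 hy
      rw [Real.dist_eq, sub_zero] at this
      exact this.le
    rw [Real.norm_eq_abs, abs_div, abs_mul, abs_pow, abs_of_pos (hpos m), Nat.abs_cast,
      div_le_iff₀ (hpos m), mul_comm]
    have h1 : |y| ^ (m - 1) ≤ r ^ (m - 1) := pow_le_pow_left₀ (abs_nonneg y) hy' _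
    exact mul_le_mul h1 (by linarith) (by positivity) (by positivity)
  have hzm : z ∈ Metric.ball (0 : ℝ) r := by
    rw [Metric.mem_ball, Real.dist_eq, sub_zero]; exact hzr
  have hS : Summable (fun m : ℕ => z ^ m / (a + m)) := by
    refine Summable.of_norm_bounded
      ((summable_geometric_of_lt_one (abs_nonneg z) hz).mul_left a⁻¹) ?_
    intro m
    rw [Real.norm_eq_abs, abs_div, abs_pow, abs_of_pos (hpos m), div_eq_inv_mul]
    gcongr
    simp
  have hD := hasDerivAt_tsum_of_isPreconnected (𝕜 := ℝ) (F := ℝ)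
    (g := fun (m : ℕ) (y : ℝ) => y ^ m / (a + m))
    (g' := fun (m : ℕ) (y : ℝ) => (m * y ^ (m - 1)) / (a + m)) hu Metric.isOpen_ball
    (convex_ball (0 : ℝ) r).isPreconnected
    (fun m y _ => (hasDerivAt_pow m y).div_const _) hb hzm hS hzm
  refine ⟨_, hD, ?_⟩
  have hS' : Summable (fun m : ℕ => (m * z ^ (m - 1)) / (a + m)) :=
    Summable.of_norm_bounded hu fun m => hb m z hzm
  rw [← tsum_mul_left, ← tsum_mul_left, ← (hS.mul_left a).tsum_add (hS'.mul_left z),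
    ← tsum_geometric_of_abs_lt_one hz]
  refine tsum_congr fun m => ?_
  have := (hpos m).ne'
  rcases m with _ | m
  · simp [ha.ne']
  · simp only [Nat.add_sub_cancel]
    field_simp
    ring

/-- The antiderivative identity underlying Proposition 4: with `a = (k-2)/(k-1)` and
`g(a, z) = a ∑_{m} z^m/(a+m)`, the function `H(c) = -g(a, -b/(λ c^{k-1}))/((k-2) λ c^{k-2})`
is an antiderivative of `1/(λ c^{k-1} + b)` wherever `c ≠ 0` and `|b| < |λ| |c|^{k-1}`. -/
theorem stmt_12 (k : ℕ) (hk : 3 ≤ k) (a lam b : ℝ) (hlam : lam ≠ 0)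
    (ha : a = ((k : ℝ) - 2) / ((k : ℝ) - 1))
    (g : ℝ → ℝ → ℝ) (hg : ∀ a' z : ℝ, g a' z = a' * ∑' m : ℕ, z ^ m / (a' + m))
    (H : ℝ → ℝ)
    (hH : ∀ c : ℝ, H c =
      -(g a (-b / (lam * c ^ (k - 1)))) / (((k : ℝ) - 2) * lam * c ^ (k - 2))) :
    ∀ c : ℝ, c ≠ 0 → |b| < |lam| * |c| ^ (k - 1) →
      HasDerivAt H (1 / (lam * c ^ (k - 1) + b)) c := by
  intro c hc hbc
  obtain ⟨n, rfl⟩ : ∃ n, k = n + 3 := ⟨k - 3, by omega⟩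
  have e1 : n + 3 - 1 = n + 2 := by omega
  have e2 : n + 3 - 2 = n + 1 := by omega
  rw [e1] at hbc ⊢
  simp only [e1, e2] at hH
  have hn : (0 : ℝ) < n + 1 := by positivity
  have hn2 : (0 : ℝ) < n + 2 := by positivity
  have ha' : a = ((n : ℝ) + 1) / (n + 2) := by
    rw [ha]; push_cast; congr 1 <;> ring
  have hapos : 0 < a := by rw [ha']; positivity
  have hL : lam * c ^ (n + 2) ≠ 0 := mul_ne_zero hlam (pow_ne_zero _ hc)
  have hz : |-b / (lam * c ^ (n + 2))| < 1 := by
    rw [abs_div, abs_neg, div_lt_one (abs_pos.2 hL), abs_mul, abs_pow]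
    exact hbc
  obtain ⟨D, hD, hE⟩ := aux_series a _ hapos hz
  have hHf : H = fun c => -(a * ∑' m : ℕ, (-b / (lam * c ^ (n + 2))) ^ m / (a + m)) /
      (((n : ℝ) + 1) * lam * c ^ (n + 1)) := by
    funext x
    rw [hH, hg]
    congr 3
    push_cast; ring
  have hzd : HasDerivAt (fun c : ℝ => -b / (lam * c ^ (n + 2)))
      (-((n + 2 : ℝ)) * (-b / (lam * c ^ (n + 2))) / c) c := by
    have h := (hasDerivAt_const c (-b)).div ((hasDerivAt_pow (n + 2) c).const_mul lam) hL
    refine h.congr_deriv ?_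
    have : n + 2 - 1 = n + 1 := by omega
    rw [this]
    push_cast
    field_simp
    ring
  have hden : HasDerivAt (fun c : ℝ => ((n : ℝ) + 1) * lam * c ^ (n + 1))
      (((n : ℝ) + 1) * lam * ((n + 1) * c ^ n)) c := by
    have h := (hasDerivAt_pow (n + 1) c).const_mul (((n : ℝ) + 1) * lam)
    simpa using h
  have hden0 : ((n : ℝ) + 1) * lam * c ^ (n + 1) ≠ 0 :=
    mul_ne_zero (mul_ne_zero hn.ne' hlam) (pow_ne_zero _ hc)
  have hcomp := (((HasDerivAt.comp c hD hzd).const_mul a).neg).div hden hden0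
  rw [hHf]
  refine hcomp.congr_deriv ?_
  have hlb : lam * c ^ (n + 2) + b ≠ 0 := by
    intro h
    have : b = -(lam * c ^ (n + 2)) := by linarith
    rw [this, abs_neg, abs_mul, abs_pow] at hbc
    exact lt_irrefl _ hbc
  have hR : (1 : ℝ) / (lam * c ^ (n + 2) + b) =
      (1 - -b / (lam * c ^ (n + 2)))⁻¹ / (lam * c ^ (n + 2)) := by
    have : 1 - -b / (lam * c ^ (n + 2)) = (lam * c ^ (n + 2) + b) / (lam * c ^ (n + 2)) := by
      field_simp
      ring
    rw [this, inv_div]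
    field_simp
  rw [hR, ← hE]
  simp only [Function.comp_def, Pi.neg_apply]
  generalize (∑' m : ℕ, (-b / (lam * c ^ (n + 2))) ^ m / (a + m)) = F
  generalize -b / (lam * c ^ (n + 2)) = z
  rw [ha']
  field_simp
  ring
end

section
/- Let k ≥ 3 be a natural number, a = (k−2)/(k−1), λ ∈ ℝ with λ ≠ 0, b ∈ ℝ, α ∈ ℝ, and T ≥ 0. Suppose c : ℝ → ℝ satisfies c(0) = α and for every s ∈ [0, T], c is differentiable at s with c′(s) = λ·c(s)^{k−1} + b, c(s) ≠ 0, and |b| < |λ|·|c(s)|^{k−1}. Then T = −g(a, −b/(λ·c(T)^{k−1})) / ((k−2)·λ·c(T)^{k−2}) + g(a, −b/(λ·α^{k−1})) / ((k−2)·λ·α^{k−2}), where g(a, z) = a·∑_{m=0}^∞ z^m/(a+m). -/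
theorem aux_S (a z : ℝ) (ha : 0 < a) (hz : |z| < 1) :
    ∃ S' : ℝ, HasDerivAt (fun z : ℝ => ∑' m : ℕ, z ^ m / (a + m)) S' z ∧
      a * (∑' m : ℕ, z ^ m / (a + m)) + z * S' = 1 / (1 - z) := by
  obtain ⟨r, hzr, hr1⟩ := exists_between hz
  have hr0 : 0 ≤ r := (abs_nonneg z).trans hzr.le
  have hpos : ∀ m : ℕ, 0 < a + m := fun m => by positivity
  have hu : Summable (fun m : ℕ => r ^ (m - 1)) := by
    rw [← summable_nat_add_iff 1]
    simpa using summable_geometric_of_lt_one hr0 hr1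
  have hb : ∀ (m : ℕ) (y : ℝ), |y| < r → ‖(m : ℝ) * y ^ (m - 1) / (a + m)‖ ≤ r ^ (m - 1) := by
    intro m y hy
    rw [Real.norm_eq_abs, abs_div, abs_mul, abs_pow, abs_of_pos (hpos m), Nat.abs_cast,
      div_le_iff₀ (hpos m), mul_comm]
    have := pow_le_pow_left₀ (abs_nonneg y) hy.le (m - 1)
    apply mul_le_mul this (by linarith) (by positivity) (by positivity)
  have hS : Summable (fun m : ℕ => z ^ m / (a + m)) := by
    refine Summable.of_norm_bounded (g := fun m : ℕ => |z| ^ m / a)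
      ((summable_geometric_of_lt_one (abs_nonneg z) hz).div_const a) ?_
    intro m
    rw [Real.norm_eq_abs, abs_div, abs_pow, abs_of_pos (hpos m)]
    apply div_le_div_of_nonneg_left (by positivity) ha
    have : (0:ℝ) ≤ m := by positivity
    linarith
  have hS' : Summable (fun m : ℕ => (m : ℝ) * z ^ (m - 1) / (a + m)) :=
    Summable.of_norm_bounded hu (fun m => hb m z hzr)
  refine ⟨∑' m : ℕ, (m : ℝ) * z ^ (m - 1) / (a + m), ?_, ?_⟩
  · refine hasDerivAt_tsum_of_isPreconnected (t := Metric.ball (0:ℝ) r) (y₀ := z) (y := z)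
      (g := fun (m : ℕ) (y : ℝ) => y ^ m / (a + m))
      (g' := fun (m : ℕ) (y : ℝ) => (m : ℝ) * y ^ (m - 1) / (a + m)) hu
      Metric.isOpen_ball (convex_ball (0:ℝ) r).isPreconnected ?_ ?_ ?_ hS ?_
    · intro m y _
      exact (hasDerivAt_pow m y).div_const _
    · intro m y hy
      exact hb m y (by simpa using hy)
    · simpa using hzr
    · simpa using hzr
  · rw [← tsum_mul_left, ← tsum_mul_left, ← (hS.mul_left a).tsum_add (hS'.mul_left z), one_div,
      ← tsum_geometric_of_abs_lt_one hz]
    congr 1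
    ext m
    have := (hpos m).ne'
    rcases m with _ | m
    · simp at this ⊢; field_simp
    · field_simp
      simp only [Nat.add_sub_cancel, pow_succ]
      ring


/-- Proposition 4: implicit solution of the scalar coefficient ODE `ċ = λ c^{k-1} + b` of an
odeco HPDS with constant control, via the Gauss hypergeometric function
`g(a, z) = a ∑_m z^m/(a+m)` with `a = (k-2)/(k-1)`. -/
theorem stmt_13 (k : ℕ) (hk : 3 ≤ k) (a lam b α T : ℝ) (hlam : lam ≠ 0) (hT : 0 ≤ T)
    (ha : a = ((k : ℝ) - 2) / ((k : ℝ) - 1))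
    (g : ℝ → ℝ → ℝ) (hg : ∀ a' z : ℝ, g a' z = a' * ∑' m : ℕ, z ^ m / (a' + m))
    (c : ℝ → ℝ) (hc0 : c 0 = α)
    (hode : ∀ s ∈ Set.Icc (0 : ℝ) T,
      HasDerivAt c (lam * c s ^ (k - 1) + b) s ∧ c s ≠ 0 ∧ |b| < |lam| * |c s| ^ (k - 1)) :
    T = -(g a (-b / (lam * c T ^ (k - 1)))) / (((k : ℝ) - 2) * lam * c T ^ (k - 2))
        + g a (-b / (lam * α ^ (k - 1))) / (((k : ℝ) - 2) * lam * α ^ (k - 2)) := by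
  obtain ⟨n, rfl⟩ : ∃ n, k = n + 2 := ⟨k - 2, by omega⟩
  have hn : 1 ≤ n := by omega
  have e1 : n + 2 - 1 = n + 1 := by omega
  have e2 : n + 2 - 2 = n := by omega
  have hn0 : (0:ℝ) < n := by exact_mod_cast hn
  simp only [e1] at hode ⊢
  rw [e2]
  have ha' : a = n / (n + 1) := by
    rw [ha]; push_cast; congr 1 <;> ring
  have hapos : 0 < a := by rw [ha']; positivity
  have e3 : ((n + 2 : ℕ) : ℝ) - 2 = n := by push_cast; ring
  rw [e3]
  subst hc0
  set S : ℝ → ℝ := fun z => ∑' m : ℕ, z ^ m / (a + m) with hSdef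
  have hgS : ∀ z, g a z = a * S z := fun z => hg a z
  rw [hgS, hgS]
  set F : ℝ → ℝ := fun x => -(a * S (-b / (lam * x ^ (n + 1)))) / (n * lam * x ^ n) with hF
  have hFd : ∀ x : ℝ, x ≠ 0 → |b| < |lam| * |x| ^ (n + 1) →
      HasDerivAt F (1 / (lam * x ^ (n + 1) + b)) x := by
    intro x hx hb
    have hne : lam * x ^ (n + 1) ≠ 0 := mul_ne_zero hlam (pow_ne_zero _ hx)
    have hz : |-b / (lam * x ^ (n + 1))| < 1 := by
      rw [abs_div, abs_neg, div_lt_one (abs_pos.mpr hne), abs_mul, abs_pow]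
      exact hb
    obtain ⟨S', hS1, hS2⟩ := aux_S a _ hapos hz
    have hden : lam * x ^ (n + 1) + b ≠ 0 := by
      intro h
      have : b = -(lam * x ^ (n + 1)) := by linarith
      rw [this, abs_neg, abs_mul, abs_pow] at hb
      exact lt_irrefl _ hb
    have hzd : HasDerivAt (fun x : ℝ => -b / (lam * x ^ (n + 1)))
        ((n + 1) * b / (lam * x ^ (n + 2))) x := by
      have h := (hasDerivAt_const x (-b)).fun_div ((hasDerivAt_pow (n + 1) x).const_mul lam) hne
      refine h.congr_deriv ?_
      push_cast
      simp only [Nat.add_sub_cancel, pow_succ]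
      field_simp
      ring
    have hcomp : HasDerivAt (fun x : ℝ => S (-b / (lam * x ^ (n + 1))))
        (S' * ((n + 1) * b / (lam * x ^ (n + 2)))) x := HasDerivAt.comp (h₂ := S) x hS1 hzd
    have hne2 : (n : ℝ) * lam * x ^ n ≠ 0 :=
      mul_ne_zero (mul_ne_zero hn0.ne' hlam) (pow_ne_zero _ hx)
    have hfin := ((hcomp.const_mul a).fun_neg).fun_div
      ((hasDerivAt_pow n x).const_mul ((n : ℝ) * lam)) hne2
    refine hfin.congr_deriv ?_
    change a * S (-b / (lam * x ^ (n + 1))) + _ = _ at hS2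
    generalize S (-b / (lam * x ^ (n + 1))) = s at *
    have h1 : 1 / (1 - -b / (lam * x ^ (n + 1))) = lam * x ^ (n + 1) / (lam * x ^ (n + 1) + b) := by
      have : 1 - -b / (lam * x ^ (n + 1)) = (lam * x ^ (n + 1) + b) / (lam * x ^ (n + 1)) := by
        field_simp
        ring
      rw [this, one_div_div]
    have h2 : 1 / (lam * x ^ (n + 1) + b)
        = (a * s + -b / (lam * x ^ (n + 1)) * S') / (lam * x ^ (n + 1)) := by
      rw [hS2, h1]; field_simp
    rw [h2, ha']
    obtain ⟨j, rfl⟩ : ∃ j, n = j + 1 := ⟨n - 1, by omega⟩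
    simp only [Nat.add_sub_cancel]
    push_cast at *
    have hj1 : (j : ℝ) + 1 ≠ 0 := by positivity
    have hj2 : (j : ℝ) + 1 + 1 ≠ 0 := by positivity
    simp only [pow_succ]
    field_simp
    ring
  have hder : ∀ s ∈ Set.Icc (0:ℝ) T, HasDerivAt (fun s => F (c s) - s) 0 s := by
    intro s hs
    obtain ⟨h1, h2, h3⟩ := hode s hs
    have hden : lam * c s ^ (n + 1) + b ≠ 0 := by
      intro h
      have : b = -(lam * c s ^ (n + 1)) := by linarith
      rw [this, abs_neg, abs_mul, abs_pow] at h3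
      exact lt_irrefl _ h3
    have h4 := (HasDerivAt.comp s (hFd (c s) h2 h3) h1).fun_sub (hasDerivAt_id' s)
    refine h4.congr_deriv ?_
    field_simp
    ring
  have hconst := constant_of_has_deriv_right_zero
    (fun s hs => (hder s hs).continuousAt.continuousWithinAt)
    (fun s hs => (hder s (Set.Ico_subset_Icc_self hs)).hasDerivWithinAt) T ⟨hT, le_refl T⟩
  simp only [hF] at hconst
  rw [neg_div (_) (a * S (-b / (lam * c 0 ^ (n + 1))))] at hconst
  linarith
end
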